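/- Let T ⊆ 2^{<ℕ} be a tree of binary strings. Then: (i) T is Π⁰₁ if and only if Ψ(T) is a Π⁰₁ closed subset of ℝ²; (ii) T is c.e. if and only if Ψ(T) is a c.e. closed subset of ℝ²; (iii) T is computable if and only if Ψ(T) is a computable closed subset of ℝ². -/

import Mathlib

open Set Metric

section TopDefs

variable {α : Type*} [TopologicalSpace α]

/-- `A ⊆ α` is an arc with endpoints `x` and `y`:
a homeomorphic (continuous injective) image of `[0,1]` sending `0 ↦ x`, `1 ↦ y`. -/
def IsArc (A : Set α) (x y : α) : Prop :=
  ∃ f : Set.Icc (0:ℝ) 1 → α, Continuous f ∧ Function.Injective f ∧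
    Set.range f = A ∧ f ⟨0, by norm_num⟩ = x ∧ f ⟨1, by norm_num⟩ = y

/-- A continuum: a nonempty compact connected set. -/
def IsContinuum (X : Set α) : Prop := IsCompact X ∧ IsConnected X

/-- Any two distinct points of `X` are endpoints of an arc contained in `X`. -/
def ArcwiseConnectedSet (X : Set α) : Prop :=
  ∀ x ∈ X, ∀ y ∈ X, x ≠ y → ∃ A, A ⊆ X ∧ IsArc A x y

/-- `X` is unicoherent: for all closed connected `A, B ⊆ X` with `A ∪ B = X`,
the intersection `A ∩ B` is connected. -/
def UnicoherentSet (X : Set α) : Prop :=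
  ∀ A B : Set α, A ⊆ X → B ⊆ X → IsClosed A → IsClosed B →
    IsConnected A → IsConnected B → A ∪ B = X → IsConnected (A ∩ B)

/-- Every subcontinuum of `X` is unicoherent. -/
def HereditarilyUnicoherent (X : Set α) : Prop :=
  ∀ Y, Y ⊆ X → IsContinuum Y → UnicoherentSet Y

/-- A dendroid: an arcwise connected, hereditarily unicoherent continuum. -/
def IsDendroid (X : Set α) : Prop :=
  IsContinuum X ∧ ArcwiseConnectedSet X ∧ HereditarilyUnicoherent X

/-- The unit circle `S¹`. -/
def unitCircle : Set (EuclideanSpace ℝ (Fin 2)) := Metric.sphere 0 1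

/-- A dendrite: a locally connected continuum containing no subset homeomorphic to `S¹`. -/
def IsDendrite (X : Set α) : Prop :=
  IsContinuum X ∧ LocallyConnectedSpace ↥X ∧
    ∀ S : Set α, S ⊆ X → IsEmpty (↥S ≃ₜ ↥unitCircle)

/-- `x` and `y` lie in the same arc-component of `Y`. -/
def SameArcComponent (Y : Set α) (x y : α) : Prop :=
  x = y ∨ ∃ A, A ⊆ Y ∧ IsArc A x y

/-- `x` is a ramification point of `X`: `X \ {x}` has at least three arc-components. -/
def IsRamificationPoint (X : Set α) (x : α) : Prop :=
  x ∈ X ∧ ∃ u v w, u ∈ X \ {x} ∧ v ∈ X \ {x} ∧ w ∈ X \ {x} ∧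
    ¬ SameArcComponent (X \ {x}) u v ∧ ¬ SameArcComponent (X \ {x}) u w ∧
    ¬ SameArcComponent (X \ {x}) v w

/-- A tree (as a continuum): a dendrite with finitely many ramification points. -/
def IsTreeContinuum (X : Set α) : Prop :=
  IsDendrite X ∧ {x | IsRamificationPoint X x}.Finite

end TopDefs

section CompDefs

/-- The rational open ball in `ℝ²` coded by `((q₁, q₂), r)`. -/
def ballOfCode (c : (ℚ × ℚ) × ℚ) : Set (ℝ × ℝ) :=
  {x | dist x (((c.1.1 : ℝ), (c.1.2 : ℝ)) : ℝ × ℝ) < (c.2 : ℝ)}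

/-- A closed set `F ⊆ ℝ²` is `Π⁰₁` if it is the complement of the union of the rational
open balls coded by some c.e. set of codes. -/
def IsPi01Closed (F : Set (ℝ × ℝ)) : Prop :=
  ∃ W : (ℚ × ℚ) × ℚ → Prop, REPred W ∧ F = Set.univ \ ⋃ c ∈ {c | W c}, ballOfCode c

/-- `F ⊆ ℝ²` is c.e. closed if the set of codes of rational open balls meeting `F` is c.e. -/
def IsCEClosed (F : Set (ℝ × ℝ)) : Prop :=
  REPred (fun c : (ℚ × ℚ) × ℚ => (F ∩ ballOfCode c).Nonempty)

/-- A computable closed subset of `ℝ²`: both `Π⁰₁` and c.e. closed. -/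
def IsComputableClosed (F : Set (ℝ × ℝ)) : Prop :=
  IsPi01Closed F ∧ IsCEClosed F

/-- A point of `ℝ²` is computable if the set of codes of rational open balls
containing it is c.e. -/
def IsComputablePoint (x : ℝ × ℝ) : Prop :=
  REPred (fun c : (ℚ × ℚ) × ℚ => x ∈ ballOfCode c)

end CompDefs

section PsiDefs

/-- A tree of binary strings: a set of finite binary strings closed under prefixes. -/
def IsTreeOfStrings (T : Set (List Bool)) : Prop :=
  ∀ σ ∈ T, ∀ τ : List Bool, τ <+: σ → τ ∈ T

/-- The point `ψ(σ) ∈ ℝ²` associated with the binary string `σ`. -/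
noncomputable def psiPt (σ : List Bool) : ℝ × ℝ :=
  ((3:ℝ) ^ (-(σ.length : ℤ)) / 2 +
      2 * ∑ i ∈ Finset.range σ.length,
        (if σ.getD i false then (3:ℝ) ^ (-((i : ℤ) + 1)) else 0),
    (2:ℝ) ^ (-(σ.length : ℤ)))

/-- The planar embedding `Ψ(T)` of a tree `T` of binary strings: the closure of the union
of the segments from `ψ(σ⁻)` to `ψ(σ)` over nonempty `σ ∈ T` (together with the points
`ψ(σ)`, `σ ∈ T`, which makes no difference except for the degenerate trees `∅`, `{⟨⟩}`). -/
noncomputable def PsiSet (T : Set (List Bool)) : Set (ℝ × ℝ) :=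
  closure (psiPt '' T ∪ ⋃ σ ∈ T, ⋃ (_ : σ ≠ []), segment ℝ (psiPt σ.dropLast) (psiPt σ))

end PsiDefs

section ComputabilityTools

variable {α β : Type*} [Primcodable α] [Primcodable β]

/-- Bounded universal quantification of a computable Boolean function is computable. -/
theorem comp_ball {f : α → ℕ → Bool} (hf : Computable₂ f) :
    ∃ g : α → ℕ → Bool, Computable₂ g ∧ ∀ a b, g a b = true ↔ ∀ n < b, f a n = true := by
  refine ⟨fun a b => Nat.rec (motive := fun _ => Bool) true (fun n ih => ih && f a n) b, ?_, ?_⟩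
  · refine Computable.nat_rec (f := fun p : α × ℕ => p.2) (g := fun _ => true)
      (h := fun p q => q.2 && f p.1 q.1) Computable.snd (Computable.const true) ?_
    exact Primrec.and.to_comp.comp (Computable.snd.comp Computable.snd)
      (hf.comp (Computable.fst.comp Computable.fst) (Computable.fst.comp Computable.snd))
  · intro a b
    induction b with
    | zero => simp
    | succ b ih =>
      simp only [Bool.and_eq_true, ih, Nat.lt_succ_iff_lt_or_eq]
      constructor
      · rintro ⟨h, h'⟩ n (hn | rfl)
        exacts [h n hn, h']
      · intro h
        exact ⟨fun n hn => h n (Or.inl hn), h b (Or.inr rfl)⟩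

theorem comp_bex {f : α → ℕ → Bool} (hf : Computable₂ f) :
    ∃ g : α → ℕ → Bool, Computable₂ g ∧ ∀ a b, g a b = true ↔ ∃ n < b, f a n = true := by
  obtain ⟨g, hg, hg'⟩ := comp_ball (f := fun a n => !(f a n)) (Primrec.not.to_comp.comp hf)
  refine ⟨fun a b => !(g a b), Primrec.not.to_comp.comp hg, fun a b => ?_⟩
  have := hg' a b
  rw [Bool.not_eq_true', ← Bool.not_eq_true, this]
  simp

theorem re_iff {p : α → Prop} :
    REPred p ↔ ∃ f : α → ℕ → Bool, Computable₂ f ∧ ∀ a, p a ↔ ∃ n, f a n = true := by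
  constructor
  · intro h
    obtain ⟨c, hc⟩ := Nat.Partrec.Code.exists_code.1 h
    refine ⟨fun a k => (Nat.Partrec.Code.evaln k c (Encodable.encode a)).isSome, ?_, ?_⟩
    · refine Primrec.option_isSome.to_comp.comp ?_
      exact Nat.Partrec.Code.primrec_evaln.to_comp.comp
        ((Computable.snd.pair (Computable.const c)).pair (Computable.encode.comp Computable.fst))
    · intro a
      have h1 : p a ↔ ∃ x, x ∈ Nat.Partrec.Code.eval c (Encodable.encode a) := by
        rw [hc]; simp
      rw [h1]
      simp only [Nat.Partrec.Code.evaln_complete, Option.isSome_iff_exists]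
      exact exists_comm
  · rintro ⟨f, hf, h⟩
    have := (Partrec.rfind (p := fun a n => Part.some (f a n)) hf.partrec₂).dom_re
    refine this.of_eq fun a => ?_
    rw [h]
    refine Nat.rfind_dom.trans ?_
    simp

theorem re_comp {p : β → Prop} (hp : REPred p) {f : α → β} (hf : Computable f) :
    REPred fun a => p (f a) :=
  Partrec.comp (f := fun b => Part.assert (p b) fun _ => Part.some ()) hp hf

theorem re_and {p q : α → Prop} (hp : REPred p) (hq : REPred q) :
    REPred fun a => p a ∧ q a := by
  obtain ⟨f, hf, hf'⟩ := re_iff.1 hp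
  obtain ⟨g, hg, hg'⟩ := re_iff.1 hq
  refine re_iff.2 ⟨fun a n => f a n.unpair.1 && g a n.unpair.2, ?_, ?_⟩
  · exact Primrec.and.to_comp.comp
      (hf.comp Computable.fst (Computable.fst.comp (Computable.unpair.comp Computable.snd)))
      (hg.comp Computable.fst (Computable.snd.comp (Computable.unpair.comp Computable.snd)))
  · intro a
    rw [hf', hg']
    constructor
    · rintro ⟨⟨n, hn⟩, m, hm⟩
      exact ⟨Nat.pair n m, by simp [hn, hm]⟩
    · rintro ⟨n, hn⟩
      rw [Bool.and_eq_true] at hn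
      exact ⟨⟨_, hn.1⟩, _, hn.2⟩

theorem re_or {p q : α → Prop} (hp : REPred p) (hq : REPred q) :
    REPred fun a => p a ∨ q a := by
  obtain ⟨f, hf, hf'⟩ := re_iff.1 hp
  obtain ⟨g, hg, hg'⟩ := re_iff.1 hq
  refine re_iff.2 ⟨fun a n => f a n || g a n, ?_, ?_⟩
  · exact Primrec.or.to_comp.comp hf hg
  · intro a
    rw [hf', hg', ← exists_or]
    simp

theorem re_ex_nat {p : α → ℕ → Prop} (hp : REPred fun x : α × ℕ => p x.1 x.2) :
    REPred fun a => ∃ n, p a n := by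
  obtain ⟨f, hf, hf'⟩ := re_iff.1 hp
  refine re_iff.2 ⟨fun a n => f (a, n.unpair.1) n.unpair.2, ?_, ?_⟩
  · exact hf.comp
      (Computable.fst.pair (Computable.fst.comp (Computable.unpair.comp Computable.snd)))
      (Computable.snd.comp (Computable.unpair.comp Computable.snd))
  · intro a
    constructor
    · rintro ⟨n, hn⟩
      obtain ⟨m, hm⟩ := (hf' (a, n)).1 hn
      exact ⟨Nat.pair n m, by simpa using hm⟩
    · rintro ⟨n, hn⟩
      exact ⟨_, (hf' (a, n.unpair.1)).2 ⟨_, hn⟩⟩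

theorem re_ex {p : α → β → Prop} (hp : REPred fun x : α × β => p x.1 x.2) :
    REPred fun a => ∃ b, p a b := by
  obtain ⟨f, hf, hf'⟩ := re_iff.1 hp
  have h : REPred fun a => ∃ n : ℕ, ∃ k : ℕ,
      ((Encodable.decode (α := β) n).map fun b => f (a, b) k).getD false = true := by
    refine re_ex_nat (re_ex_nat (ComputablePred.to_re ?_))
    refine ComputablePred.computable_iff.2
      ⟨fun x : (α × ℕ) × ℕ => ((Encodable.decode (α := β) x.1.2).map
        fun b => f (x.1.1, b) x.2).getD false, ?_, rfl⟩
    refine Computable.option_getD (Computable.option_map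
      (Computable.decode.comp (Computable.snd.comp Computable.fst)) ?_) (Computable.const false)
    exact hf.comp ((Computable.fst.comp (Computable.fst.comp Computable.fst)).pair Computable.snd)
      (Computable.snd.comp Computable.fst)
  refine h.of_eq fun a => ?_
  constructor
  · rintro ⟨n, k, h⟩
    cases hd : (Encodable.decode (α := β) n) with
    | none => simp [hd] at h
    | some b =>
      rw [hd] at h
      exact ⟨b, (hf' (a, b)).2 ⟨k, by simpa using h⟩⟩
  · rintro ⟨b, hb⟩
    obtain ⟨k, hk⟩ := (hf' (a, b)).1 hb
    exact ⟨Encodable.encode b, k, by simpa using hk⟩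

theorem re_ball {p : α → ℕ → Prop} (hp : REPred fun x : α × ℕ => p x.1 x.2)
    {g : α → ℕ} (hg : Computable g) : REPred fun a => ∀ n < g a, p a n := by
  obtain ⟨f, hf, hf'⟩ := re_iff.1 hp
  obtain ⟨F, hF, hF'⟩ := comp_bex (α := α × ℕ) hf
  obtain ⟨G, hG, hG'⟩ := comp_ball (α := α × ℕ) (f := fun x n => F (x.1, n) x.2)
    (hF.comp ((Computable.fst.comp Computable.fst).pair Computable.snd)
      (Computable.snd.comp Computable.fst))
  refine re_iff.2 ⟨fun a s => G (a, s) (g a), ?_, ?_⟩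
  · exact hG.comp Computable.id (hg.comp Computable.fst)
  · intro a
    simp only [hG', hF']
    constructor
    · intro h
      have h2 : ∀ n, ∃ s, n < g a → f (a, n) s = true := by
        intro n
        by_cases hn : n < g a
        · obtain ⟨s, hs⟩ := (hf' (a, n)).1 (h n hn)
          exact ⟨s, fun _ => hs⟩
        · exact ⟨0, fun h => absurd h hn⟩
      choose s hs using h2
      refine ⟨(Finset.range (g a)).sup s + 1, fun n hn => ⟨s n, ?_, hs n hn⟩⟩
      exact Nat.lt_succ_of_le (Finset.le_sup (f := s) (Finset.mem_range.2 hn))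
    · rintro ⟨s, h⟩ n hn
      obtain ⟨m, -, hm⟩ := h n hn
      exact (hf' (a, n)).2 ⟨m, hm⟩

end ComputabilityTools
section RatCoding

/-- The natural number code underlying the standard encoding of the rationals. -/
def ratCode (q : ℚ) : ℕ := Nat.pair (Equiv.intEquivNat q.num) q.den

theorem encode_rat (q : ℚ) : ∃ (_ : DecidablePred (· ∈ Set.range ratCode)),
    @Encodable.encode ℚ Primcodable.toEncodable q = List.countP (· ∈ Set.range ratCode) (List.range (ratCode q)) :=
  ⟨@Encodable.decidableRangeEncode ℚ Rat.instEncodable, rfl⟩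

theorem intEquivNat_cases (z : ℤ) :
    z.natAbs = (Equiv.intEquivNat z + 1) / 2 ∧
    z.toNat = (Equiv.intEquivNat z / 2) * (1 - Equiv.intEquivNat z % 2) ∧
    (-z).toNat = (Equiv.intEquivNat z % 2) * ((Equiv.intEquivNat z + 1) / 2) := by
  cases z with
  | ofNat n =>
    have : Equiv.intEquivNat (Int.ofNat n) = 2 * n := rfl
    rw [this]
    refine ⟨?_, ?_, ?_⟩
    · simp; omega
    · simp
    · simp
  | negSucc n =>
    have : Equiv.intEquivNat (Int.negSucc n) = 2 * n + 1 := rfl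
    rw [this]
    refine ⟨?_, ?_, ?_⟩
    · simp; omega
    · have : (2 * n + 1) % 2 = 1 := by omega
      simp [this]
    · have : (2 * n + 1) % 2 = 1 := by omega
      rw [this]
      simp; omega

theorem coprime_iff_bdd {n d : ℕ} (hd : 0 < d) :
    n.Coprime d ↔ ∀ k < d + 1, n % k = 0 ∧ d % k = 0 → k = 1 := by
  constructor
  · rintro h k - ⟨h1, h2⟩
    exact Nat.eq_one_of_dvd_coprimes h (Nat.dvd_of_mod_eq_zero h1) (Nat.dvd_of_mod_eq_zero h2)
  · intro h
    apply h (n.gcd d)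
    · exact Nat.lt_succ_of_le (Nat.le_of_dvd hd (Nat.gcd_dvd_right n d))
    · exact ⟨Nat.mod_eq_zero_of_dvd (Nat.gcd_dvd_left n d),
        Nat.mod_eq_zero_of_dvd (Nat.gcd_dvd_right n d)⟩

/-- Primitive recursive description of the valid rational codes. -/
def IsRatCode (m : ℕ) : Prop :=
  0 < m.unpair.2 ∧ ∀ k < m.unpair.2 + 1,
    ((m.unpair.1 + 1) / 2) % k = 0 ∧ m.unpair.2 % k = 0 → k = 1

theorem mem_range_ratCode (m : ℕ) : m ∈ Set.range ratCode ↔ IsRatCode m := by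
  unfold IsRatCode
  constructor
  · rintro ⟨q, rfl⟩
    simp only [ratCode, Nat.unpair_pair]
    refine ⟨q.den_pos, ?_⟩
    rw [← coprime_iff_bdd q.den_pos, ← (intEquivNat_cases q.num).1]
    exact q.reduced
  · rintro ⟨h1, h2⟩
    rw [← coprime_iff_bdd h1] at h2
    refine ⟨⟨Equiv.intEquivNat.symm m.unpair.1, m.unpair.2, h1.ne', ?_⟩, ?_⟩
    · rw [(intEquivNat_cases _).1, Equiv.apply_symm_apply]
      exact h2
    · simp [ratCode]

theorem primrec_isRatCode : PrimrecPred IsRatCode := by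
  have h1 : PrimrecRel fun (k : ℕ) (m : ℕ) =>
      ((m.unpair.1 + 1) / 2) % k = 0 ∧ m.unpair.2 % k = 0 → k = 1 := by
    have hn : Primrec fun x : ℕ × ℕ => (x.2.unpair.1 + 1) / 2 :=
      Primrec.nat_div.comp (Primrec.succ.comp (Primrec.fst.comp (Primrec.unpair.comp Primrec.snd)))
        (Primrec.const 2)
    have hd : Primrec fun x : ℕ × ℕ => x.2.unpair.2 :=
      Primrec.snd.comp (Primrec.unpair.comp Primrec.snd)
    have hA : PrimrecPred fun x : ℕ × ℕ => ((x.2.unpair.1 + 1) / 2) % x.1 = 0 :=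
      Primrec.eq.comp (Primrec.nat_mod.comp hn Primrec.fst) (Primrec.const 0)
    have hB : PrimrecPred fun x : ℕ × ℕ => x.2.unpair.2 % x.1 = 0 :=
      Primrec.eq.comp (Primrec.nat_mod.comp hd Primrec.fst) (Primrec.const 0)
    have hC : PrimrecPred fun x : ℕ × ℕ => x.1 = 1 :=
      Primrec.eq.comp Primrec.fst (Primrec.const 1)
    refine ((hA.and hB).not.or hC).of_eq fun x => ?_
    tauto
  have hd : Primrec fun m : ℕ => m.unpair.2 := Primrec.snd.comp Primrec.unpair
  have h2 := h1.forall_lt.comp (Primrec.succ.comp hd) Primrec.id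
  have h3 : PrimrecPred fun m : ℕ => 0 < m.unpair.2 := Primrec.nat_lt.comp (Primrec.const 0) hd
  exact h3.and h2

theorem computable_ratCode : Computable ratCode := by
  classical
  have hc : Primrec fun n => Nat.count IsRatCode n := by
    have h : Primrec fun n => (List.filter (fun m => decide (IsRatCode m)) (List.range n)).length :=
      Primrec.list_length.comp ((Primrec.listFilter primrec_isRatCode).comp Primrec.list_range)
    refine h.of_eq fun n => ?_
    induction n with
    | zero => simp
    | succ n ih =>
      rw [List.range_succ, List.filter_append, List.length_append, ih, Nat.count_succ]
      by_cases hn : IsRatCode n <;> simp [hn]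
  have hcnt : ∀ q : ℚ, Nat.count IsRatCode (ratCode q) = @Encodable.encode ℚ Primcodable.toEncodable q := by
    intro q
    obtain ⟨hdec, h⟩ := encode_rat q
    rw [h]
    generalize ratCode q = n
    induction n with
    | zero => simp
    | succ n ih =>
      rw [List.range_succ, List.countP_append, ← ih, Nat.count_succ]
      by_cases hn : IsRatCode n
      · have := (mem_range_ratCode n).2 hn
        simp only [List.countP_singleton, this, hn]
        simp
      · have := mt (mem_range_ratCode n).1 hn
        simp only [List.countP_singleton, this, hn]
        simp
  have hmem : ∀ q : ℚ, IsRatCode (ratCode q) := fun q => (mem_range_ratCode _).1 ⟨q, rfl⟩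
  have hex : ∀ q : ℚ, ∃ m, IsRatCode m ∧ Nat.count IsRatCode m = @Encodable.encode ℚ Primcodable.toEncodable q :=
    fun q => ⟨ratCode q, hmem q, hcnt q⟩
  refine (Computable.find (P := fun (q : ℚ) m => IsRatCode m ∧
    Nat.count IsRatCode m = @Encodable.encode ℚ Primcodable.toEncodable q) ?_ hex).of_eq fun q => ?_
  · refine PrimrecPred.computablePred ((primrec_isRatCode.comp Primrec.snd).and ?_)
    exact Primrec.eq.comp (hc.comp Primrec.snd) (Primrec.encode.comp Primrec.fst)
  · obtain ⟨h1, h2⟩ := Nat.find_spec (hex q)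
    exact Nat.count_injective h1 (hmem q) (h2.trans (hcnt q).symm)

/-- Positive part of the numerator. -/
def qpos (q : ℚ) : ℕ := q.num.toNat
/-- Negative part of the numerator. -/
def qneg (q : ℚ) : ℕ := (-q.num).toNat

theorem computable_den : Computable fun q : ℚ => q.den :=
  (Computable.snd.comp (Computable.unpair.comp computable_ratCode)).of_eq fun q => by
    simp [ratCode]

theorem computable_qpos : Computable qpos := by
  have h : Primrec fun a : ℕ => (a / 2) * (1 - a % 2) :=
    Primrec.nat_mul.comp (Primrec.nat_div.comp Primrec.id (Primrec.const 2))
      (Primrec.nat_sub.comp (Primrec.const 1) (Primrec.nat_mod.comp Primrec.id (Primrec.const 2)))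
  refine (h.to_comp.comp
    (Computable.fst.comp (Computable.unpair.comp computable_ratCode))).of_eq fun q => ?_
  simp only [ratCode, Nat.unpair_pair, qpos]
  exact (intEquivNat_cases q.num).2.1.symm

theorem computable_qneg : Computable qneg := by
  have h : Primrec fun a : ℕ => (a % 2) * ((a + 1) / 2) :=
    Primrec.nat_mul.comp (Primrec.nat_mod.comp Primrec.id (Primrec.const 2))
      (Primrec.nat_div.comp Primrec.succ (Primrec.const 2))
  refine (h.to_comp.comp
    (Computable.fst.comp (Computable.unpair.comp computable_ratCode))).of_eq fun q => ?_
  simp only [ratCode, Nat.unpair_pair, qneg]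
  exact (intEquivNat_cases q.num).2.2.symm

theorem rat_eq_parts (q : ℚ) : (q : ℝ) = ((qpos q : ℝ) - qneg q) / q.den := by
  have h : ((qpos q : ℤ) - qneg q) = q.num := by
    unfold qpos qneg; omega
  have h2 : ((qpos q : ℝ) - qneg q) = (q.num : ℝ) := by
    rw [← h]; push_cast; ring
  rw [h2]
  exact Rat.cast_def q

end RatCoding
section Tests

variable {γ : Type*} [Primcodable γ]

theorem cadd {f g : γ → ℕ} (hf : Computable f) (hg : Computable g) :
    Computable fun a => f a + g a := Primrec.nat_add.to_comp.comp hf hg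

theorem cmul {f g : γ → ℕ} (hf : Computable f) (hg : Computable g) :
    Computable fun a => f a * g a := Primrec.nat_mul.to_comp.comp hf hg

theorem csub {f g : γ → ℕ} (hf : Computable f) (hg : Computable g) :
    Computable fun a => f a - g a := Primrec.nat_sub.to_comp.comp hf hg

theorem primrec_pow (b : ℕ) : Primrec fun n : ℕ => b ^ n := by
  have h : Primrec fun n : ℕ => Nat.rec (motive := fun _ => ℕ) 1 (fun _ ih => ih * b) n :=
    Primrec.nat_rec' (f := fun n : ℕ => n) (g := fun _ => 1) (h := fun _ q => q.2 * b) Primrec.id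
      (Primrec.const 1) (Primrec.nat_mul.comp (Primrec.snd.comp Primrec.snd) (Primrec.const b))
  refine h.of_eq fun n => ?_
  induction n with
  | zero => simp
  | succ n ih => rw [pow_succ, ← ih]

theorem cpow (b : ℕ) {f : γ → ℕ} (hf : Computable f) : Computable fun a => b ^ f a :=
  (primrec_pow b).to_comp.comp hf

theorem clt {f g : γ → ℕ} (hf : Computable f) (hg : Computable g) :
    ComputablePred fun a => f a < g a := by
  refine ComputablePred.computable_iff.2 ⟨fun a => decide (f a < g a), ?_, ?_⟩
  · exact Primrec.nat_lt.decide.to_comp.comp hf hg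
  · funext a; simp

theorem cand {p q : γ → Prop} (hp : ComputablePred p) (hq : ComputablePred q) :
    ComputablePred fun a => p a ∧ q a := by
  obtain ⟨f, hf, rfl⟩ := ComputablePred.computable_iff.1 hp
  obtain ⟨g, hg, rfl⟩ := ComputablePred.computable_iff.1 hq
  refine ComputablePred.computable_iff.2 ⟨fun a => f a && g a, Primrec.and.to_comp.comp hf hg, ?_⟩
  funext a; simp

theorem abs_test (X D E : ℕ) (hD : 0 < D) (q r : ℚ) :
    |(X : ℝ) / D - q| < r + E / D ↔
      X * (q.den * r.den) + qneg q * (D * r.den) + qneg r * (D * q.den) <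
        qpos q * (D * r.den) + qpos r * (D * q.den) + E * (q.den * r.den) ∧
      qpos q * (D * r.den) + qneg r * (D * q.den) <
        X * (q.den * r.den) + qneg q * (D * r.den) + qpos r * (D * q.den) +
          E * (q.den * r.den) := by
  have hD' : (0 : ℝ) < D := by exact_mod_cast hD
  have hq : (0 : ℝ) < q.den := by exact_mod_cast q.den_pos
  have hr : (0 : ℝ) < r.den := by exact_mod_cast r.den_pos
  have hP : (0 : ℝ) < D * (q.den * r.den) := by positivity
  rw [abs_lt, rat_eq_parts q, rat_eq_parts r, and_comm]
  refine and_congr ?_ ?_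
  · rw [← mul_lt_mul_iff_left₀ hP]
    rw [← Nat.cast_lt (α := ℝ)]
    push_cast
    field_simp
    constructor <;> intro h <;> linarith
  · rw [← mul_lt_mul_iff_left₀ hP]
    rw [← Nat.cast_lt (α := ℝ)]
    push_cast
    field_simp
    constructor <;> intro h <;> linarith

theorem computable_abs_test {X D E : γ → ℕ} {q r : γ → ℚ} (hX : Computable X) (hD : Computable D)
    (hE : Computable E) (hq : Computable q) (hr : Computable r) (h0 : ∀ a, 0 < D a) :
    ComputablePred fun a => |(X a : ℝ) / D a - q a| < r a + E a / D a := by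
  have hqd := computable_den.comp hq
  have hqp := computable_qpos.comp hq
  have hqn := computable_qneg.comp hq
  have hrd := computable_den.comp hr
  have hrp := computable_qpos.comp hr
  have hrn := computable_qneg.comp hr
  have h1 := cmul hqd hrd
  have h2 := cmul hD hrd
  have h3 := cmul hD hqd
  refine (cand (clt (cadd (cadd (cmul hX h1) (cmul hqn h2)) (cmul hrn h3))
    (cadd (cadd (cmul hqp h2) (cmul hrp h3)) (cmul hE h1)))
    (clt (cadd (cmul hqp h2) (cmul hrn h3))
      (cadd (cadd (cadd (cmul hX h1) (cmul hqn h2)) (cmul hrp h3)) (cmul hE h1)))).of_eq ?_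
  intro a
  exact (abs_test _ _ _ (h0 a) _ _).symm

/-- `r < 1 / M` is a computable test. -/
theorem computable_small_test {M : γ → ℕ} {r : γ → ℚ} (hM : Computable M) (hr : Computable r)
    (h0 : ∀ a, 0 < M a) : ComputablePred fun a => (r a : ℝ) < 1 / M a := by
  refine (clt (cmul hM (computable_qpos.comp hr))
    (cadd (computable_den.comp hr) (cmul hM (computable_qneg.comp hr)))).of_eq fun a => ?_
  have hM' : (0 : ℝ) < M a := by exact_mod_cast h0 a
  have hr' : (0 : ℝ) < (r a).den := by exact_mod_cast (r a).den_pos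
  rw [rat_eq_parts (r a), div_lt_div_iff₀ hr' hM', ← Nat.cast_lt (α := ℝ)]
  push_cast
  constructor <;> intro h <;> linarith

end Tests

section Horner

/-- Ternary Horner value of a binary string. -/
def hv (σ : List Bool) : ℕ := σ.foldl (fun v b => 3 * v + b.toNat) 0

theorem hv_concat (σ : List Bool) (b : Bool) : hv (σ ++ [b]) = 3 * hv σ + b.toNat := by
  simp [hv, List.foldl_append]

theorem hv_append (ρ δ : List Bool) : hv (ρ ++ δ) = 3 ^ δ.length * hv ρ + hv δ := by
  induction δ using List.reverseRecOn with
  | nil => simp [hv]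
  | append_singleton δ b ih =>
    rw [← List.append_assoc, hv_concat, ih, hv_concat]
    simp [pow_succ]; ring

theorem hv_bound (δ : List Bool) : 2 * hv δ + 1 ≤ 3 ^ δ.length := by
  induction δ using List.reverseRecOn with
  | nil => simp [hv]
  | append_singleton δ b ih =>
    rw [hv_concat, List.length_append, List.length_singleton, pow_succ]
    cases b <;> simp <;> omega

theorem hv_inj {σ τ : List Bool} (hl : σ.length = τ.length) (h : hv σ = hv τ) : σ = τ := by
  induction σ using List.reverseRecOn generalizing τ with
  | nil => simpa [eq_comm] using hl
  | append_singleton σ b ih =>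
    obtain rfl | ⟨τ', c, rfl⟩ := τ.eq_nil_or_concat
    · simp at hl
    · rw [List.concat_eq_append] at *
      rw [hv_concat, hv_concat] at h
      have h1 : σ.length = τ'.length := by simpa using hl
      have hb : b = c := by
        cases b <;> cases c <;> simp at h ⊢ <;> omega
      subst hb
      rw [ih h1 (by omega)]

theorem primrec_hv : Primrec hv := by
  refine Primrec.list_foldl (f := fun σ : List Bool => σ) (g := fun _ => 0)
    (h := fun _ x => 3 * x.1 + x.2.toNat) Primrec.id (Primrec.const 0) ?_
  refine Primrec.nat_add.comp
    (Primrec.nat_mul.comp (Primrec.const 3) (Primrec.fst.comp Primrec.snd)) ?_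
  exact (Primrec.dom_finite Bool.toNat).comp (Primrec.snd.comp Primrec.snd)

theorem primrec_dropLast : Primrec fun σ : List Bool => σ.dropLast := by
  refine (Primrec.list_take.comp (Primrec.nat_sub.comp Primrec.list_length (Primrec.const 1))
    Primrec.id).of_eq fun σ => ?_
  exact (List.dropLast_eq_take).symm

/-- All binary strings of length at most `N`. -/
def strs (N : ℕ) : List (List Bool) :=
  Nat.rec (motive := fun _ => List (List Bool)) [[]]
    (fun _ l => [] :: (l.map (List.cons true) ++ l.map (List.cons false))) N

theorem mem_strs (N : ℕ) (σ : List Bool) : σ ∈ strs N ↔ σ.length ≤ N := by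
  induction N generalizing σ with
  | zero => simp [strs]
  | succ N ih =>
    have h : strs (N + 1) =
      [] :: ((strs N).map (List.cons true) ++ (strs N).map (List.cons false)) := rfl
    rw [h]
    cases σ with
    | nil => simp
    | cons b σ => cases b <;> simp [ih]

theorem primrec_strs : Primrec strs := by
  refine Primrec.nat_rec' (f := fun N : ℕ => N) (g := fun _ => [[]])
    (h := fun _ (x : ℕ × List (List Bool)) =>
      [] :: (x.2.map (List.cons true) ++ x.2.map (List.cons false)))
    Primrec.id (Primrec.const _) ?_
  refine Primrec.list_cons.comp (Primrec.const []) (Primrec.list_append.comp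
    (Primrec.list_map (Primrec.snd.comp Primrec.snd) ?_)
    (Primrec.list_map (Primrec.snd.comp Primrec.snd) ?_))
  · exact Primrec.list_cons.comp (Primrec.const true) Primrec.snd
  · exact Primrec.list_cons.comp (Primrec.const false) Primrec.snd

end Horner
section Geometry

theorem psi_fst (σ : List Bool) : (psiPt σ).1 = (1 + 4 * (hv σ : ℝ)) / (2 * 3 ^ σ.length) := by
  have h : ∑ i ∈ Finset.range σ.length,
      (if σ.getD i false then (3:ℝ) ^ (-((i : ℤ) + 1)) else 0) = hv σ / 3 ^ σ.length := by
    induction σ using List.reverseRecOn with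
    | nil => simp [hv]
    | append_singleton σ b ih =>
      rw [List.length_append, List.length_singleton, Finset.sum_range_succ, hv_concat]
      have h1 : ∑ i ∈ Finset.range σ.length,
          (if (σ ++ [b]).getD i false then (3:ℝ) ^ (-((i : ℤ) + 1)) else 0) =
          ∑ i ∈ Finset.range σ.length,
          (if σ.getD i false then (3:ℝ) ^ (-((i : ℤ) + 1)) else 0) := by
        refine Finset.sum_congr rfl fun i hi => ?_
        rw [List.getD_append _ _ _ _ (Finset.mem_range.1 hi)]
      rw [h1, ih]
      have h2 : (3:ℝ) ^ (-((σ.length : ℤ) + 1)) = 1 / 3 ^ (σ.length + 1) := by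
        rw [zpow_neg, one_div]; norm_cast
      rw [h2]
      cases b
      · simp [pow_succ]; field_simp
      · simp [pow_succ]; field_simp
  unfold psiPt
  dsimp only
  rw [h, zpow_neg, zpow_natCast]
  field_simp
  ring

theorem psi_snd (σ : List Bool) : (psiPt σ).2 = 1 / 2 ^ σ.length := by
  unfold psiPt
  simp

theorem psi_fst_prefix {ρ τ : List Bool} (h : ρ <+: τ) :
    |(psiPt τ).1 - (psiPt ρ).1| ≤ 1 / (2 * 3 ^ ρ.length) := by
  obtain ⟨δ, rfl⟩ := h
  rw [psi_fst, psi_fst, hv_append, List.length_append]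
  have h1 : (2 * (hv δ : ℝ) + 1) ≤ 3 ^ δ.length := by exact_mod_cast hv_bound δ
  have h2 : (0 : ℝ) ≤ hv δ := Nat.cast_nonneg _
  have h3 : (0 : ℝ) < 3 ^ δ.length := by positivity
  have h4 : (0 : ℝ) < 3 ^ ρ.length := by positivity
  have key : (1 + 4 * ((3 ^ δ.length * hv ρ + hv δ : ℕ) : ℝ)) / (2 * 3 ^ (ρ.length + δ.length)) -
      (1 + 4 * (hv ρ : ℝ)) / (2 * 3 ^ ρ.length) =
      ((1 + 4 * (hv δ : ℝ)) / 3 ^ δ.length - 1) * (1 / (2 * 3 ^ ρ.length)) := by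
    push_cast
    rw [pow_add]
    field_simp
    ring
  rw [key, abs_mul, abs_of_pos (show (0 : ℝ) < 1 / (2 * 3 ^ ρ.length) by positivity)]
  refine mul_le_of_le_one_left (by positivity) ?_
  rw [abs_le]
  constructor
  · have : (0 : ℝ) ≤ (1 + 4 * (hv δ : ℝ)) / 3 ^ δ.length := by positivity
    linarith
  · have : (1 + 4 * (hv δ : ℝ)) / 3 ^ δ.length ≤ 2 := by
      rw [div_le_iff₀ h3]; linarith
    linarith

theorem psi_fst_sep {σ τ : List Bool} (hl : σ.length = τ.length) (h : σ ≠ τ) :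
    2 / 3 ^ σ.length ≤ |(psiPt σ).1 - (psiPt τ).1| := by
  have hne : hv σ ≠ hv τ := fun h' => h (hv_inj hl h')
  rw [psi_fst, psi_fst, ← hl]
  have h4 : (0 : ℝ) < 3 ^ σ.length := by positivity
  have key : (1 + 4 * (hv σ : ℝ)) / (2 * 3 ^ σ.length) - (1 + 4 * (hv τ : ℝ)) / (2 * 3 ^ σ.length)
      = (((hv σ : ℤ) - hv τ : ℤ) : ℝ) * (2 / 3 ^ σ.length) := by
    push_cast; field_simp; ring
  rw [key, abs_mul, abs_of_pos (show (0 : ℝ) < 2 / 3 ^ σ.length by positivity)]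
  refine le_mul_of_one_le_left (by positivity) ?_
  rw [← Int.cast_abs]
  have : (1 : ℤ) ≤ |(hv σ : ℤ) - hv τ| := by
    apply Int.one_le_abs
    omega
  exact_mod_cast this

/-- Parametrisation of the segment attached to `σ`. -/
noncomputable def sg (σ : List Bool) (t : ℝ) : ℝ × ℝ :=
  ((1 - t) * (psiPt σ.dropLast).1 + t * (psiPt σ).1,
    (1 - t) * (psiPt σ.dropLast).2 + t * (psiPt σ).2)

theorem mem_seg {σ : List Bool} {z : ℝ × ℝ} :
    z ∈ segment ℝ (psiPt σ.dropLast) (psiPt σ) ↔ ∃ t, 0 ≤ t ∧ t ≤ 1 ∧ z = sg σ t := by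
  rw [segment_eq_image]
  constructor
  · rintro ⟨t, ht, rfl⟩
    exact ⟨t, ht.1, ht.2, rfl⟩
  · rintro ⟨t, h0, h1, rfl⟩
    exact ⟨t, ⟨h0, h1⟩, rfl⟩

theorem sg_one (σ : List Bool) : sg σ 1 = psiPt σ := by
  simp [sg]

theorem dist_lt_iff (z w : ℝ × ℝ) (r : ℝ) : dist z w < r ↔ |z.1 - w.1| < r ∧ |z.2 - w.2| < r := by
  rw [Prod.dist_eq, max_lt_iff, Real.dist_eq, Real.dist_eq]

theorem dist_le_iff' (z w : ℝ × ℝ) (r : ℝ) :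
    dist z w ≤ r ↔ |z.1 - w.1| ≤ r ∧ |z.2 - w.2| ≤ r := by
  rw [Prod.dist_eq, max_le_iff, Real.dist_eq, Real.dist_eq]

theorem abs_conv {a b c r t : ℝ} (h0 : 0 ≤ t) (h1 : t ≤ 1) (ha : |a - c| ≤ r) (hb : |b - c| ≤ r) :
    |(1 - t) * a + t * b - c| ≤ r := by
  rw [abs_le] at *
  constructor <;> nlinarith [ha.1, ha.2, hb.1, hb.2]

/-- A point of a segment lies close to a prefix of the parent node. -/
theorem sg_fst_prefix {ρ τ : List Bool} (h : ρ <+: τ.dropLast) {t : ℝ} (h0 : 0 ≤ t) (h1 : t ≤ 1) :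
    |(sg τ t).1 - (psiPt ρ).1| ≤ 1 / (2 * 3 ^ ρ.length) :=
  abs_conv h0 h1 (psi_fst_prefix h) (psi_fst_prefix (h.trans (List.dropLast_prefix τ)))

theorem sep {σ τ : List Bool} {t : ℝ} (h0 : 0 ≤ t) (h1 : t ≤ 1)
    (hd : dist (sg τ t) (psiPt σ) < 1 / 6 ^ (σ.length + 1)) : σ <+: τ := by
  rw [dist_lt_iff] at hd
  obtain ⟨hx, hy⟩ := hd
  have e3 : (0 : ℝ) < 3 ^ σ.length := by positivity
  have e2 : (0 : ℝ) < 2 ^ σ.length := by positivity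
  have h6 : (1 : ℝ) / 6 ^ (σ.length + 1) = 1 / 6 * ((1 / 2 ^ σ.length) * (1 / 3 ^ σ.length)) := by
    rw [pow_succ, show (6 : ℝ) = 2 * 3 by norm_num, mul_pow]; field_simp
  set u : ℝ := 1 / 2 ^ σ.length with hu
  set v : ℝ := 1 / 3 ^ σ.length with hv'
  have hu0 : 0 < u := by positivity
  have hv0 : 0 < v := by positivity
  have hu1 : u ≤ 1 := by
    rw [hu, div_le_one e2]; exact one_le_pow₀ (by norm_num)
  have hv1 : v ≤ 1 := by
    rw [hv', div_le_one e3]; exact one_le_pow₀ (by norm_num)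
  have huv : u * v ≤ v := mul_le_of_le_one_left hv0.le hu1
  have huv' : u * v ≤ u := mul_le_of_le_one_right hu0.le hv1
  rw [h6] at hx hy
  by_cases hl : σ.length ≤ τ.dropLast.length
  · by_contra hne
    have hpre : τ.dropLast.take σ.length <+: τ.dropLast := List.take_prefix _ _
    have hlen : (τ.dropLast.take σ.length).length = σ.length := by
      rw [List.length_take]; omega
    have hneq : τ.dropLast.take σ.length ≠ σ := by
      intro h
      rw [h] at hpre
      exact hne (hpre.trans (List.dropLast_prefix τ))
    have a1 := sg_fst_prefix hpre h0 h1
    have a2 := psi_fst_sep hlen hneq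
    rw [hlen] at a1 a2
    have b1 : (1 : ℝ) / (2 * 3 ^ σ.length) = v / 2 := by rw [hv']; field_simp
    have b2 : (2 : ℝ) / 3 ^ σ.length = 2 * v := by rw [hv']; field_simp
    rw [b1] at a1
    rw [b2] at a2
    have tri := abs_sub_le (psiPt (τ.dropLast.take σ.length)).1 (sg τ t).1 (psiPt σ).1
    rw [abs_sub_comm (psiPt (τ.dropLast.take σ.length)).1 (sg τ t).1] at tri
    linarith
  · push Not at hl
    have hτ : τ.length ≤ σ.length := by
      rw [List.length_dropLast] at hl; omega
    have hys : (psiPt σ).2 = u := psi_snd σ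
    rcases hτ.lt_or_eq with hlt | heq
    · exfalso
      have c1 : 2 * u ≤ (psiPt τ).2 := by
        rw [psi_snd, hu, mul_one_div, div_le_div_iff₀ e2 (by positivity), one_mul]
        rw [← pow_succ']
        exact pow_le_pow_right₀ (by norm_num) hlt
      have c2 : 2 * u ≤ (psiPt τ.dropLast).2 := by
        rw [psi_snd, hu, mul_one_div, div_le_div_iff₀ e2 (by positivity), one_mul]
        rw [← pow_succ']
        exact pow_le_pow_right₀ (by norm_num) hl
      have c3 : 2 * u ≤ (sg τ t).2 := by
        simp only [sg]; nlinarith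
      rw [hys] at hy
      have := (abs_lt.1 hy).2
      nlinarith
    · by_cases hst : σ = τ
      · rw [hst]
      · exfalso
        have hdl : τ.dropLast.length + 1 = σ.length := by
          rw [List.length_dropLast] at hl ⊢; omega
        have d1 : (psiPt τ).2 = u := by rw [psi_snd, heq]
        have d2 : (psiPt τ.dropLast).2 = 2 * u := by
          rw [psi_snd, hu, ← hdl, pow_succ]; field_simp
        have d3 : (sg τ t).2 - (psiPt σ).2 = (1 - t) * u := by
          simp only [sg]; rw [d1, d2, hys]; ring
        rw [d3] at hy
        have hy' := (abs_lt.1 hy).2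
        have d4 : 1 - t < 1 / 6 * v := by
          have : (1 - t) * u < (1 / 6 * v) * u := by linarith
          exact lt_of_mul_lt_mul_right this hu0.le
        have f1 := psi_fst_prefix (List.dropLast_prefix τ)
        have f2 : (1 : ℝ) / (2 * 3 ^ τ.dropLast.length) = 3 / 2 * v := by
          rw [hv', ← hdl, pow_succ]; field_simp
        rw [f2] at f1
        have f3 : (sg τ t).1 - (psiPt τ).1 =
            -((1 - t) * ((psiPt τ).1 - (psiPt τ.dropLast).1)) := by
          simp only [sg]; ring
        have f4 : |(sg τ t).1 - (psiPt τ).1| ≤ 3 / 2 * v := by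
          rw [f3, abs_neg, abs_mul, abs_of_nonneg (by linarith : 0 ≤ 1 - t)]
          calc (1 - t) * |(psiPt τ).1 - (psiPt τ.dropLast).1|
              ≤ 1 * |(psiPt τ).1 - (psiPt τ.dropLast).1| := by
                apply mul_le_mul_of_nonneg_right _ (abs_nonneg _); linarith
            _ ≤ 3 / 2 * v := by linarith
        have f5 := psi_fst_sep heq (Ne.symm hst)
        have b2 : (2 : ℝ) / 3 ^ τ.length = 2 * v := by rw [hv', heq]; field_simp
        rw [b2] at f5
        have tri := abs_sub_le (psiPt τ).1 (sg τ t).1 (psiPt σ).1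
        rw [abs_sub_comm (psiPt τ).1 (sg τ t).1] at tri
        linarith

theorem psi_snd_bd (σ : List Bool) : 0 < (psiPt σ).2 ∧ (psiPt σ).2 ≤ 1 := by
  rw [psi_snd]
  refine ⟨by positivity, ?_⟩
  rw [div_le_one (by positivity)]
  exact one_le_pow₀ (by norm_num)

/-- Grid points are dense in segments. -/
theorem grid (τ : List Bool) {t : ℝ} (h0 : 0 ≤ t) (h1 : t ≤ 1) (N : ℕ) :
    ∃ k ≤ N + 1, dist (sg τ t) (sg τ ((k : ℝ) / ((N + 1 : ℕ) : ℝ))) ≤ 1 / ((N + 1 : ℕ) : ℝ) := by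
  have hN : (0 : ℝ) < ((N + 1 : ℕ) : ℝ) := by positivity
  set M : ℝ := ((N + 1 : ℕ) : ℝ) with hM
  refine ⟨⌊t * M⌋₊, ?_, ?_⟩
  · have : ⌊t * M⌋₊ ≤ ⌊M⌋₊ := Nat.floor_le_floor (by nlinarith)
    rwa [hM, Nat.floor_natCast] at this
  · have hf1 : (⌊t * M⌋₊ : ℝ) ≤ t * M := Nat.floor_le (by positivity)
    have hf2 : t * M < ⌊t * M⌋₊ + 1 := Nat.lt_floor_add_one _
    set k : ℝ := (⌊t * M⌋₊ : ℝ)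
    have hk1 : k / M ≤ t := by rw [div_le_iff₀ hN]; exact hf1
    have hk2 : t - k / M ≤ 1 / M := by
      rw [sub_le_iff_le_add, ← add_div, le_div_iff₀ hN]; linarith
    have hab : |t - k / M| ≤ 1 / M := by
      rw [abs_of_nonneg (by linarith)]; exact hk2
    have hM0 : (0 : ℝ) ≤ 1 / M := by positivity
    rw [dist_le_iff']
    have gen : ∀ a b : ℝ, |b - a| ≤ 1 →
        |(1 - t) * a + t * b - ((1 - k / M) * a + k / M * b)| ≤ 1 / M := by
      intro a b hb
      have : (1 - t) * a + t * b - ((1 - k / M) * a + k / M * b) = (t - k / M) * (b - a) := by ring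
      rw [this, abs_mul]
      calc _ ≤ 1 / M * 1 := mul_le_mul hab hb (abs_nonneg _) hM0
        _ = 1 / M := mul_one _
    refine ⟨gen _ _ ?_, gen _ _ ?_⟩
    · refine (psi_fst_prefix (List.dropLast_prefix τ)).trans ?_
      rw [div_le_one (by positivity)]
      have : (1 : ℝ) ≤ 3 ^ τ.dropLast.length := one_le_pow₀ (by norm_num)
      linarith
    · have p1 := psi_snd_bd τ
      have p2 := psi_snd_bd τ.dropLast
      rw [abs_le]; constructor <;> linarith

theorem approx {T : Set (List Bool)} (hT : IsTreeOfStrings T) {τ : List Bool} (hτ : τ ∈ T)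
    {t : ℝ} (h0 : 0 ≤ t) (h1 : t ≤ 1) (N : ℕ) :
    ∃ τ' ∈ T, τ'.length ≤ N ∧ ∃ k ≤ N + 1,
      dist (sg τ t) (sg τ' ((k : ℝ) / ((N + 1 : ℕ) : ℝ))) ≤ 1 / ((N + 1 : ℕ) : ℝ) := by
  by_cases hl : τ.length ≤ N
  · exact ⟨τ, hτ, hl, grid τ h0 h1 N⟩
  · push Not at hl
    have hlen : (τ.dropLast.take N).length = N := by
      rw [List.length_take, List.length_dropLast]; omega
    have hpre : τ.dropLast.take N <+: τ.dropLast := List.take_prefix _ _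
    refine ⟨τ.dropLast.take N, hT _ hτ _ (hpre.trans (List.dropLast_prefix τ)), hlen.le,
      N + 1, le_rfl, ?_⟩
    have hN : (0 : ℝ) < ((N + 1 : ℕ) : ℝ) := by positivity
    rw [div_self hN.ne', sg_one, dist_le_iff']
    have h2 : ((N + 1 : ℕ) : ℝ) ≤ 2 ^ N := by exact_mod_cast Nat.lt_two_pow_self (n := N)
    have h23 : (2 : ℝ) ^ N ≤ 3 ^ N := pow_le_pow_left₀ (by norm_num) (by norm_num) N
    constructor
    · refine (sg_fst_prefix hpre h0 h1).trans ?_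
      rw [hlen]
      apply one_div_le_one_div_of_le hN
      linarith
    · have q1 : (psiPt (τ.dropLast.take N)).2 = 1 / 2 ^ N := by rw [psi_snd, hlen]
      have gen : ∀ ρ : List Bool, N ≤ ρ.length → (psiPt ρ).2 ≤ 1 / 2 ^ N := by
        intro ρ hρ
        rw [psi_snd]
        apply one_div_le_one_div_of_le (by positivity)
        exact pow_le_pow_right₀ (by norm_num) hρ
      have q2 := gen τ hl.le
      have q3 := gen τ.dropLast (by rw [List.length_dropLast]; omega)
      have q4 := psi_snd_bd τ
      have q5 := psi_snd_bd τ.dropLast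
      have q6 : (1 : ℝ) / 2 ^ N ≤ 1 / ((N + 1 : ℕ) : ℝ) := one_div_le_one_div_of_le hN h2
      refine le_trans ?_ q6
      rw [q1]
      refine abs_conv h0 h1 ?_ ?_ <;> rw [abs_le] <;> constructor <;> linarith

end Geometry
section Main

/-- The centre of a coded ball. -/
noncomputable def ctr (c : (ℚ × ℚ) × ℚ) : ℝ × ℝ := ((c.1.1 : ℝ), (c.1.2 : ℝ))

theorem mem_ball_iff (z : ℝ × ℝ) (c : (ℚ × ℚ) × ℚ) : z ∈ ballOfCode c ↔ dist z (ctr c) < c.2 :=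
  Iff.rfl

theorem isOpen_ball (c : (ℚ × ℚ) × ℚ) : IsOpen (ballOfCode c) :=
  Metric.isOpen_ball (x := ctr c) (ε := (c.2 : ℝ))

theorem computable_near {γ : Type*} [Primcodable γ] {σ : γ → List Bool} {k m e : γ → ℕ}
    {c : γ → (ℚ × ℚ) × ℚ} (hσ : Computable σ) (hk : Computable k) (hm : Computable m)
    (he : Computable e) (hc : Computable c) (hm0 : ∀ a, 0 < m a) (hkm : ∀ a, k a ≤ m a) :
    ComputablePred fun a =>
      dist (sg (σ a) ((k a : ℝ) / (m a : ℝ))) (ctr (c a)) < (c a).2 + (e a : ℝ) / (m a : ℝ) := by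
  have hσ' : Computable fun a => (σ a).dropLast := primrec_dropLast.to_comp.comp hσ
  have hl : Computable fun a => (σ a).length := Computable.list_length.comp hσ
  have hl' : Computable fun a => (σ a).dropLast.length := Computable.list_length.comp hσ'
  have hV : Computable fun a => 1 + 4 * hv (σ a) :=
    cadd (Computable.const 1) (cmul (Computable.const 4) (primrec_hv.to_comp.comp hσ))
  have hV' : Computable fun a => 1 + 4 * hv (σ a).dropLast :=
    cadd (Computable.const 1) (cmul (Computable.const 4) (primrec_hv.to_comp.comp hσ'))
  have hB : Computable fun a => 2 * 6 ^ (σ a).length * 6 ^ (σ a).dropLast.length :=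
    cmul (cmul (Computable.const 2) (cpow 6 hl)) (cpow 6 hl')
  have hX : Computable fun a =>
      (m a - k a) * (1 + 4 * hv (σ a).dropLast) * 2 ^ (σ a).dropLast.length * 6 ^ (σ a).length +
        k a * (1 + 4 * hv (σ a)) * 2 ^ (σ a).length * 6 ^ (σ a).dropLast.length :=
    cadd (cmul (cmul (cmul (csub hm hk) hV') (cpow 2 hl')) (cpow 6 hl))
      (cmul (cmul (cmul hk hV) (cpow 2 hl)) (cpow 6 hl'))
  have hY : Computable fun a =>
      (m a - k a) * 2 * 3 ^ (σ a).dropLast.length * 6 ^ (σ a).length +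
        k a * 2 * 3 ^ (σ a).length * 6 ^ (σ a).dropLast.length :=
    cadd (cmul (cmul (cmul (csub hm hk) (Computable.const 2)) (cpow 3 hl')) (cpow 6 hl))
      (cmul (cmul (cmul hk (Computable.const 2)) (cpow 3 hl)) (cpow 6 hl'))
  have hD0 : ∀ a, 0 < m a * (2 * 6 ^ (σ a).length * 6 ^ (σ a).dropLast.length) := by
    intro a
    have := hm0 a
    positivity
  have h1 := computable_abs_test hX (cmul hm hB) (cmul he hB)
    (Computable.fst.comp (Computable.fst.comp hc)) (Computable.snd.comp hc) hD0
  have h2 := computable_abs_test hY (cmul hm hB) (cmul he hB)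
    (Computable.snd.comp (Computable.fst.comp hc)) (Computable.snd.comp hc) hD0
  refine (cand h1 h2).of_eq fun a => ?_
  rw [dist_lt_iff]
  have hma : (0 : ℝ) < m a := by exact_mod_cast hm0 a
  have e1 : ((e a * (2 * 6 ^ (σ a).length * 6 ^ (σ a).dropLast.length) : ℕ) : ℝ) /
      ((m a * (2 * 6 ^ (σ a).length * 6 ^ (σ a).dropLast.length) : ℕ) : ℝ) = e a / m a := by
    push_cast; field_simp
  have p6 : ∀ n : ℕ, (6 : ℝ) ^ n = 2 ^ n * 3 ^ n := fun n => by rw [← mul_pow]; norm_num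
  have e2 : (((m a - k a) * (1 + 4 * hv (σ a).dropLast) * 2 ^ (σ a).dropLast.length *
        6 ^ (σ a).length + k a * (1 + 4 * hv (σ a)) * 2 ^ (σ a).length *
        6 ^ (σ a).dropLast.length : ℕ) : ℝ) /
      ((m a * (2 * 6 ^ (σ a).length * 6 ^ (σ a).dropLast.length) : ℕ) : ℝ) =
      (sg (σ a) ((k a : ℝ) / (m a : ℝ))).1 := by
    simp only [sg]
    rw [psi_fst, psi_fst]
    push_cast [Nat.cast_sub (hkm a)]
    rw [p6, p6]
    field_simp
  have e3 : (((m a - k a) * 2 * 3 ^ (σ a).dropLast.length *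
        6 ^ (σ a).length + k a * 2 * 3 ^ (σ a).length *
        6 ^ (σ a).dropLast.length : ℕ) : ℝ) /
      ((m a * (2 * 6 ^ (σ a).length * 6 ^ (σ a).dropLast.length) : ℕ) : ℝ) =
      (sg (σ a) ((k a : ℝ) / (m a : ℝ))).2 := by
    simp only [sg]
    rw [psi_snd, psi_snd]
    push_cast [Nat.cast_sub (hkm a)]
    rw [p6, p6]
    field_simp
  rw [e1, e2, e3]
  rfl

theorem computable_psi_mem {γ : Type*} [Primcodable γ] {σ : γ → List Bool}
    {c : γ → (ℚ × ℚ) × ℚ} (hσ : Computable σ) (hc : Computable c) :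
    ComputablePred fun a => psiPt (σ a) ∈ ballOfCode (c a) := by
  refine (computable_near hσ (Computable.const 1) (Computable.const 1) (Computable.const 0) hc
    (fun _ => one_pos) (fun _ => le_rfl)).of_eq fun a => ?_
  rw [mem_ball_iff]
  simp [sg_one]

theorem meet_iff (T : Set (List Bool)) {O : Set (ℝ × ℝ)} (hO : IsOpen O) :
    (PsiSet T ∩ O).Nonempty ↔ ∃ σ ∈ T, ∃ t, 0 ≤ t ∧ t ≤ 1 ∧ sg σ t ∈ O := by
  unfold PsiSet
  rw [closure_inter_open_nonempty_iff hO]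
  constructor
  · rintro ⟨z, hz | hz, hzO⟩
    · obtain ⟨σ, hσ, rfl⟩ := hz
      exact ⟨σ, hσ, 1, zero_le_one, le_rfl, by rwa [sg_one]⟩
    · simp only [Set.mem_iUnion] at hz
      obtain ⟨σ, hσ, -, hz⟩ := hz
      obtain ⟨t, h0, h1, rfl⟩ := mem_seg.1 hz
      exact ⟨σ, hσ, t, h0, h1, hzO⟩
  · rintro ⟨σ, hσ, t, h0, h1, hO⟩
    refine ⟨sg σ t, ?_, hO⟩
    by_cases hne : σ = []
    · left
      refine ⟨σ, hσ, ?_⟩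
      subst hne
      simp [sg]
      ext <;> simp <;> ring
    · right
      simp only [Set.mem_iUnion]
      exact ⟨σ, hσ, hne, mem_seg.2 ⟨t, h0, h1, rfl⟩⟩

theorem psi_mem_of {T : Set (List Bool)} {σ : List Bool} (h : σ ∈ T) : psiPt σ ∈ PsiSet T :=
  subset_closure (Or.inl ⟨σ, h, rfl⟩)

/-- If `Ψ(T)` has a point close to `ψ(σ)` then `σ ∈ T`. -/
theorem mem_of_close {T : Set (List Bool)} (hT : IsTreeOfStrings T) {σ : List Bool}
    {O : Set (ℝ × ℝ)} (hO : IsOpen O) (hmeet : (PsiSet T ∩ O).Nonempty)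
    (hsub : ∀ z ∈ O, dist z (psiPt σ) < 1 / 6 ^ (σ.length + 1)) : σ ∈ T := by
  obtain ⟨τ, hτ, t, h0, h1, hz⟩ := (meet_iff T hO).1 hmeet
  exact hT τ hτ σ (sep h0 h1 (hsub _ hz))

theorem mem_iff_psi {T : Set (List Bool)} (hT : IsTreeOfStrings T) (σ : List Bool) :
    σ ∈ T ↔ psiPt σ ∈ PsiSet T := by
  refine ⟨psi_mem_of, fun h => ?_⟩
  have hp : (0 : ℝ) < 1 / 6 ^ (σ.length + 1) := by positivity
  exact mem_of_close hT (O := Metric.ball (psiPt σ) (1 / 6 ^ (σ.length + 1))) Metric.isOpen_ball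
    ⟨psiPt σ, h, Metric.mem_ball_self hp⟩ (fun z hz => hz)

/-- Small rational balls around any point. -/
theorem exists_code (p : ℝ × ℝ) {ε : ℝ} (hε : 0 < ε) :
    ∃ c : (ℚ × ℚ) × ℚ, p ∈ ballOfCode c ∧ (c.2 : ℝ) < ε := by
  obtain ⟨r, hr0, hr1⟩ := exists_rat_btwn hε
  obtain ⟨x, hx1, hx2⟩ := exists_rat_btwn (show p.1 - r < p.1 by linarith)
  obtain ⟨y, hy1, hy2⟩ := exists_rat_btwn (show p.2 - r < p.2 by linarith)
  refine ⟨((x, y), r), ?_, hr1⟩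
  rw [mem_ball_iff, dist_lt_iff]
  simp only [ctr]
  constructor <;> rw [abs_lt] <;> constructor <;> linarith

theorem ce_of_tree {T : Set (List Bool)} (h : REPred fun σ : List Bool => σ ∈ T) :
    IsCEClosed (PsiSet T) := by
  have hre : REPred fun c : (ℚ × ℚ) × ℚ => ∃ σ : List Bool, ∃ N k : ℕ, σ ∈ T ∧
      dist (sg σ (((min k (N + 1) : ℕ) : ℝ) / ((N + 1 : ℕ) : ℝ))) (ctr c) <
        c.2 + ((0 : ℕ) : ℝ) / ((N + 1 : ℕ) : ℝ) := by
    refine re_ex (re_ex_nat (re_ex_nat (re_and ?_ (ComputablePred.to_re ?_))))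
    · exact re_comp h (Computable.snd.comp (Computable.fst.comp Computable.fst))
    · have hN : Computable fun x : ((((ℚ × ℚ) × ℚ) × List Bool) × ℕ) × ℕ => x.1.2 + 1 :=
        Computable.succ.comp (Computable.snd.comp Computable.fst)
      exact computable_near (γ := ((((ℚ × ℚ) × ℚ) × List Bool) × ℕ) × ℕ)
        (Computable.snd.comp (Computable.fst.comp Computable.fst))
        (Primrec.nat_min.to_comp.comp Computable.snd hN) hN (Computable.const 0)
        (Computable.fst.comp (Computable.fst.comp Computable.fst))
        (fun _ => Nat.succ_pos _) (fun _ => min_le_right _ _)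
  refine hre.of_eq fun c => ?_
  rw [meet_iff T (isOpen_ball c)]
  constructor
  · rintro ⟨σ, N, k, hσ, hd⟩
    refine ⟨σ, hσ, ((min k (N + 1) : ℕ) : ℝ) / ((N + 1 : ℕ) : ℝ), by positivity, ?_, ?_⟩
    · exact div_le_one_of_le₀ (by exact_mod_cast min_le_right k (N + 1)) (by positivity)
    · rw [mem_ball_iff]
      simpa using hd
  · rintro ⟨σ, hσ, t, h0, h1, hz⟩
    rw [mem_ball_iff] at hz
    obtain ⟨N, hN⟩ := exists_nat_one_div_lt (sub_pos.2 hz)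
    obtain ⟨k, hk, hkd⟩ := grid σ h0 h1 N
    refine ⟨σ, N, k, hσ, ?_⟩
    rw [min_eq_left hk]
    have tri := dist_triangle_left (sg σ ((k : ℝ) / ((N + 1 : ℕ) : ℝ))) (ctr c) (sg σ t)
    push_cast at *
    rw [zero_div, add_zero]
    linarith

theorem tree_of_ce {T : Set (List Bool)} (hT : IsTreeOfStrings T) (h : IsCEClosed (PsiSet T)) :
    REPred fun σ : List Bool => σ ∈ T := by
  have hre : REPred fun σ : List Bool => ∃ c : (ℚ × ℚ) × ℚ, (PsiSet T ∩ ballOfCode c).Nonempty ∧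
      psiPt σ ∈ ballOfCode c ∧ (c.2 : ℝ) < 1 / ((2 * 6 ^ (σ.length + 1) : ℕ) : ℝ) := by
    refine re_ex (re_and (re_comp h Computable.snd) (ComputablePred.to_re (cand ?_ ?_)))
    · exact computable_psi_mem Computable.fst Computable.snd
    · exact computable_small_test (cmul (Computable.const 2)
        (cpow 6 (Computable.succ.comp (Computable.list_length.comp Computable.fst))))
        (Computable.snd.comp Computable.snd) (fun _ => by positivity)
  refine hre.of_eq fun σ => ?_
  constructor
  · rintro ⟨c, hmeet, hmem, hsm⟩
    refine mem_of_close hT (isOpen_ball c) hmeet fun z hz => ?_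
    rw [mem_ball_iff] at hz hmem
    have tri := dist_triangle_right z (psiPt σ) (ctr c)
    have : (1 : ℝ) / ((2 * 6 ^ (σ.length + 1) : ℕ) : ℝ) = (1 / 6 ^ (σ.length + 1)) / 2 := by
      push_cast; field_simp
    rw [this] at hsm
    linarith
  · intro hσ
    obtain ⟨c, hc1, hc2⟩ := exists_code (psiPt σ)
      (show (0 : ℝ) < 1 / ((2 * 6 ^ (σ.length + 1) : ℕ) : ℝ) by positivity)
    exact ⟨c, ⟨psiPt σ, psi_mem_of hσ, hc1⟩, hc1, hc2⟩

theorem cotree_of_pi {T : Set (List Bool)} (hT : IsTreeOfStrings T)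
    (h : IsPi01Closed (PsiSet T)) : REPred fun σ : List Bool => σ ∉ T := by
  obtain ⟨W, hW, hF⟩ := h
  have hre : REPred fun σ : List Bool => ∃ c : (ℚ × ℚ) × ℚ, W c ∧ psiPt σ ∈ ballOfCode c :=
    re_ex (re_and (re_comp hW Computable.snd)
      (computable_psi_mem Computable.fst Computable.snd).to_re)
  refine hre.of_eq fun σ => ?_
  rw [mem_iff_psi hT, hF]
  simp

theorem pi_of_cotree {T : Set (List Bool)} (hT : IsTreeOfStrings T)
    (h : REPred fun σ : List Bool => σ ∉ T) : IsPi01Closed (PsiSet T) := by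
  refine ⟨fun c => ∃ N : ℕ, ∀ i < (strs N).length, (strs N).getD i [] ∉ T ∨ ∀ k < N + 2,
    ¬ (dist (sg ((strs N).getD i []) (((min k (N + 1) : ℕ) : ℝ) / ((N + 1 : ℕ) : ℝ))) (ctr c) <
        c.2 + ((1 : ℕ) : ℝ) / ((N + 1 : ℕ) : ℝ)), ?_, ?_⟩
  · refine re_ex_nat (re_ball (re_or ?_ (re_ball (ComputablePred.to_re (ComputablePred.not ?_)) ?_))
      (Computable.list_length.comp (primrec_strs.to_comp.comp Computable.snd)))
    · exact re_comp h ((Primrec.list_getD []).to_comp.comp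
        (primrec_strs.to_comp.comp (Computable.snd.comp Computable.fst)) Computable.snd)
    · have hN : Computable fun x : ((((ℚ × ℚ) × ℚ) × ℕ) × ℕ) × ℕ => x.1.1.2 :=
        Computable.snd.comp (Computable.fst.comp Computable.fst)
      have hN1 := Computable.succ.comp hN
      exact computable_near (γ := ((((ℚ × ℚ) × ℚ) × ℕ) × ℕ) × ℕ)
        ((Primrec.list_getD []).to_comp.comp
          (primrec_strs.to_comp.comp hN) (Computable.snd.comp Computable.fst))
        (Primrec.nat_min.to_comp.comp Computable.snd hN1) hN1 (Computable.const 1)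
        (Computable.fst.comp (Computable.fst.comp Computable.fst))
        (fun _ => Nat.succ_pos _) (fun _ => min_le_right _ _)
    · exact Computable.succ.comp (Computable.succ.comp (Computable.snd.comp Computable.fst))
  · ext p
    simp only [Set.mem_sdiff, Set.mem_univ, true_and, Set.mem_iUnion, Set.mem_ofPred_eq,
      exists_prop, not_exists, not_and]
    constructor
    · rintro hp c ⟨N, hN⟩ hpc
      obtain ⟨τ, hτ, t, h0, h1, hz⟩ := (meet_iff T (isOpen_ball c)).1 ⟨p, hp, hpc⟩
      obtain ⟨τ', hτ', hl, k, hk, hd⟩ := approx hT hτ h0 h1 N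
      obtain ⟨i, hi, hiτ⟩ := List.getElem_of_mem ((mem_strs N τ').2 hl)
      have hget : (strs N).getD i [] = τ' := by
        rw [List.getD_eq_getElem _ _ hi, hiτ]
      have := hN i hi
      rw [hget] at this
      rcases this with h' | h'
      · exact h' hτ'
      · refine h' k (by omega) ?_
        rw [min_eq_left hk]
        rw [mem_ball_iff] at hz
        have tri := dist_triangle_left (sg τ' ((k : ℝ) / ((N + 1 : ℕ) : ℝ))) (ctr c) (sg τ t)
        push_cast at *
        linarith
    · intro hall
      by_contra hp
      have hcl : IsClosed (PsiSet T) := isClosed_closure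
      obtain ⟨ε, hε, hball⟩ := Metric.isOpen_iff.1 hcl.isOpen_compl p hp
      obtain ⟨c, hc1, hc2⟩ := exists_code p (show 0 < ε / 4 by positivity)
      obtain ⟨N, hN⟩ := exists_nat_one_div_lt (show 0 < ε / 4 by positivity)
      refine hall c ⟨N, fun i _ => ?_⟩ hc1
      by_cases hi : (strs N).getD i [] ∈ T
      · right
        intro k _ hlt
        have hmem : (PsiSet T ∩ Metric.ball p ε).Nonempty := by
          refine (meet_iff T Metric.isOpen_ball).2 ⟨_, hi,
            ((min k (N + 1) : ℕ) : ℝ) / ((N + 1 : ℕ) : ℝ), ?_, ?_, ?_⟩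
          · positivity
          · exact div_le_one_of_le₀ (by exact_mod_cast min_le_right k (N + 1)) (by positivity)
          · rw [Metric.mem_ball]
            rw [mem_ball_iff] at hc1
            refine lt_of_le_of_lt (dist_triangle_right _ _ (ctr c)) ?_
            push_cast at *
            linarith
        obtain ⟨z, hz1, hz2⟩ := hmem
        exact hball hz2 hz1
      · exact Or.inl hi

end Main

theorem psiSet_computability_transfer (T : Set (List Bool)) (hT : IsTreeOfStrings T) :
    (REPred (fun σ : List Bool => σ ∉ T) ↔ IsPi01Closed (PsiSet T)) ∧
    (REPred (fun σ : List Bool => σ ∈ T) ↔ IsCEClosed (PsiSet T)) ∧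
    (ComputablePred (fun σ : List Bool => σ ∈ T) ↔ IsComputableClosed (PsiSet T)) := by
  have h1 : REPred (fun σ : List Bool => σ ∉ T) ↔ IsPi01Closed (PsiSet T) :=
    ⟨pi_of_cotree hT, cotree_of_pi hT⟩
  have h2 : REPred (fun σ : List Bool => σ ∈ T) ↔ IsCEClosed (PsiSet T) :=
    ⟨ce_of_tree, tree_of_ce hT⟩
  refine ⟨h1, h2, ?_⟩
  rw [ComputablePred.computable_iff_re_compl_re', IsComputableClosed, ← h1, ← h2]
  exact and_comm
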